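/- Suppose additionally that M is a positive integer with M ≤ N′, c > 0, and |K_l(t)| ≤ c(l+1) for all l ≤ M and all t. Then for every ε > 0 and every time t with 0 ≤ t < (1/(4c(1+e)))·( log M − 2 − log log(N′³/(2ε)) ), the average block size satisfies E_{s,t}[l] ≤ exp(2c(1+ε)·t). -/

import Mathlib

/-!
If `w` is increasing, `d/dt E[w(l)]` is the sum of the probability currents `2 K_l φ_l φ_{l+1}`
weighted by the increments of `w`, and AM-GM with `|K_l| ≤ c(l+1)` bounds it by `c E[D w]`, where
`D w l = (l+1)(w(l+1) - w(l)) + l(w(l) - w(l-1))`. Since the rates are controlled only up to `M`,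
every weight is evaluated at `min l M`, which can only decrease the bound.

Two weights suffice. As `D (l + 1/2) = 2(l + 1/2)`, the truncated mean satisfies
`E[min l M] ≤ (exp(2ct) - 1)/2`. With `a = exp(-4ct)`, the exponential moment
`E[exp(a(min l M + 1/2) - 1/2)]` is decreasing and starts at `1`, so the sites beyond `M`
contribute at most `1` to the mean as long as `N' ≤ exp(a(M + 1/2) - 1/2)`, which the bound on `t`
guarantees once `N' > 2(1+ε)`. For `N' ≤ 2(1+ε)`, truncate at `1` instead: `E[l] ≤ N' E[min l 1]`,
and Bernoulli's inequality absorbs the factor `N'` into the exponent `1 + ε`.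
-/

open Finset Real

/-- The expectation `E[f(l)]` of a function `f` of the site, in the state with amplitudes `ψ`;
only the sites `0, …, N` count. -/
def expectation (N : ℕ) (ψ f : ℕ → ℝ) : ℝ := ∑ l ∈ range (N + 1), f l * ψ l ^ 2

/-- The right-hand side `κ_{l-1} ψ_{l-1} - κ_l ψ_{l+1}` of the walk equation at the site `l`, with
`κ_{-1} = 0` encoded by the case distinction. -/
def walkVelocity (κ ψ : ℕ → ℝ) (l : ℕ) : ℝ :=
  (if l = 0 then 0 else κ (l - 1) * ψ (l - 1)) - κ l * ψ (l + 1)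

/-- The probability current from the site `l` to the site `l + 1`. -/
def current (κ ψ : ℕ → ℝ) (l : ℕ) : ℝ := 2 * κ l * ψ l * ψ (l + 1)

/-- The rate at which the expectation of an increasing weight `w` can grow, per unit of probability
at the site `l`, when the rates satisfy `|κ_l| ≤ l + 1`. At `l = 0` the truncated `l - 1` is
harmless because of the factor `l`. -/
def driftBound (w : ℕ → ℝ) (l : ℕ) : ℝ :=
  (l + 1) * (w (l + 1) - w l) + l * (w l - w (l - 1))

/-- `φ` is the continuous-time quantum walk on the sites `0, …, N` with rates `K`, started at the
site `0`. The condition `K_N = 0` decouples the walk from the unused amplitude `φ_{N+1}`. -/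
structure IsQuantumWalk (N : ℕ) (K φ : ℕ → ℝ → ℝ) : Prop where
  rate_top : ∀ t, K N t = 0
  hasDerivAt : ∀ l ≤ N, ∀ t, HasDerivAt (φ l) (walkVelocity (K · t) (φ · t) l) t
  init_zero : φ 0 0 = 1
  init_of_pos : ∀ l, 0 < l → l ≤ N → φ l 0 = 0

section SingleTime

variable {N m : ℕ} {c : ℝ} {κ ψ w f g : ℕ → ℝ}

theorem expectation_mono (hfg : ∀ l ≤ N, f l ≤ g l) : expectation N ψ f ≤ expectation N ψ g :=
  sum_le_sum fun l hl ↦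
    mul_le_mul_of_nonneg_right (hfg l (mem_range_succ_iff.1 hl)) (sq_nonneg _)

theorem expectation_add :
    expectation N ψ (fun l ↦ f l + g l) = expectation N ψ f + expectation N ψ g := by
  simp only [expectation, add_mul, sum_add_distrib]

theorem expectation_const_mul (r : ℝ) :
    expectation N ψ (fun l ↦ r * f l) = r * expectation N ψ f := by
  simp only [expectation, mul_assoc, mul_sum]

theorem expectation_nonpos (hf : ∀ l, f l ≤ 0) : expectation N ψ f ≤ 0 :=
  sum_nonpos fun l _ ↦ mul_nonpos_of_nonpos_of_nonneg (hf l) (sq_nonneg _)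

theorem sum_mul_walkVelocity (N : ℕ) (κ ψ w : ℕ → ℝ) :
    ∑ l ∈ range (N + 1), w l * (2 * ψ l * walkVelocity κ ψ l) =
      ∑ l ∈ range N, (w (l + 1) - w l) * current κ ψ l - w N * current κ ψ N := by
  induction N with
  | zero =>
    simp only [walkVelocity, current, zero_add, sum_range_one, sum_range_zero, if_true]
    ring
  | succ N ih =>
    rw [sum_range_succ, ih, sum_range_succ]
    simp only [walkVelocity, current, Nat.add_eq_zero_iff, one_ne_zero, and_false, if_false,
      Nat.add_sub_cancel]
    ring

theorem current_le {r : ℝ} {l : ℕ} (hκ : |κ l| ≤ r) :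
    current κ ψ l ≤ r * (ψ l ^ 2 + ψ (l + 1) ^ 2) := by
  have am_gm : 2 * (|ψ l| * |ψ (l + 1)|) ≤ ψ l ^ 2 + ψ (l + 1) ^ 2 := by
    simpa only [sq_abs, mul_assoc] using two_mul_le_add_sq |ψ l| |ψ (l + 1)|
  calc current κ ψ l ≤ |current κ ψ l| := le_abs_self _
    _ = |κ l| * (2 * (|ψ l| * |ψ (l + 1)|)) := by
      simp only [current, abs_mul, Nat.abs_ofNat]
      ring
    _ ≤ r * (ψ l ^ 2 + ψ (l + 1) ^ 2) :=
      mul_le_mul hκ am_gm (by positivity) ((abs_nonneg _).trans hκ)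

theorem expectation_driftBound (N : ℕ) (ψ w : ℕ → ℝ) :
    expectation N ψ (driftBound w) =
      ∑ l ∈ range N, (l + 1) * (w (l + 1) - w l) * (ψ l ^ 2 + ψ (l + 1) ^ 2) +
        (N + 1) * (w (N + 1) - w N) * ψ N ^ 2 := by
  induction N with
  | zero => simp [expectation, driftBound]
  | succ N ih =>
    rw [expectation, sum_range_succ, ← expectation, ih, sum_range_succ]
    simp only [driftBound, Nat.add_sub_cancel]
    push_cast
    ring

theorem sum_mul_current_le (hc : 0 ≤ c) (hκ : ∀ l < m, |κ l| ≤ c * (l + 1))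
    (hw : Monotone w) (hwm : ∀ l, m ≤ l → w (l + 1) = w l) :
    ∑ l ∈ range N, (w (l + 1) - w l) * current κ ψ l ≤ c * expectation N ψ (driftBound w) := by
  have increment_nonneg (l : ℕ) : 0 ≤ w (l + 1) - w l := sub_nonneg.2 (hw l.le_succ)
  have term_le (l : ℕ) : (w (l + 1) - w l) * current κ ψ l ≤
      c * ((l + 1) * (w (l + 1) - w l) * (ψ l ^ 2 + ψ (l + 1) ^ 2)) := by
    rcases lt_or_ge l m with hl | hl
    · calc (w (l + 1) - w l) * current κ ψ l
          ≤ (w (l + 1) - w l) * (c * (l + 1) * (ψ l ^ 2 + ψ (l + 1) ^ 2)) :=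
            mul_le_mul_of_nonneg_left (current_le (hκ l hl)) (increment_nonneg l)
        _ = _ := by ring
    · simp [hwm l hl]
  have boundary_nonneg : 0 ≤ c * ((N + 1) * (w (N + 1) - w N) * ψ N ^ 2) := by
    have := increment_nonneg N
    positivity
  rw [expectation_driftBound, mul_add, mul_sum]
  exact (sum_le_sum fun l _ ↦ term_le l).trans (le_add_of_nonneg_right boundary_nonneg)

theorem driftBound_comp_min_le (hw : Monotone w) (l : ℕ) :
    driftBound (fun k ↦ w (min k m)) l ≤ driftBound w (min l m) := by
  have up_nonneg : 0 ≤ ((m : ℝ) + 1) * (w (m + 1) - w m) :=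
    mul_nonneg (by positivity) (sub_nonneg.2 (hw m.le_succ))
  have down_nonneg : 0 ≤ (m : ℝ) * (w m - w (m - 1)) :=
    mul_nonneg (by positivity) (sub_nonneg.2 (hw (m.sub_le 1)))
  rcases lt_trichotomy l m with hl | rfl | hl
  · simp [driftBound, min_eq_left hl.le, min_eq_left (Nat.succ_le_of_lt hl),
      min_eq_left ((l.sub_le 1).trans hl.le)]
  · simpa [driftBound] using up_nonneg
  · simpa [driftBound, min_eq_right hl.le, min_eq_right (hl.le.trans l.le_succ),
      min_eq_right (Nat.le_sub_one_of_lt hl)] using add_nonneg up_nonneg down_nonneg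

end SingleTime

theorem driftBound_id_add_half (l : ℕ) :
    driftBound (fun k ↦ (k : ℝ) + 1 / 2) l = 2 * (l + 1 / 2) := by
  rcases l with _ | l
  · norm_num [driftBound]
  · simp only [driftBound, Nat.add_sub_cancel]
    push_cast
    ring

theorem driftBound_exp_le {a : ℝ} (ha : 0 ≤ a) (ha' : a ≤ 1) (l : ℕ) :
    driftBound (fun k ↦ exp (a * (k + 1 / 2) - 1 / 2)) l ≤
      4 * a * (l + 1 / 2) * exp (a * (l + 1 / 2) - 1 / 2) := by
  set W := exp (a * (l + 1 / 2) - 1 / 2) with hW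
  have up_step : exp (a * ((l + 1 : ℕ) + 1 / 2) - 1 / 2) - W ≤ 2 * a * W := by
    have exp_sub_one_le : exp a - 1 ≤ 2 * a := by
      simpa [abs_of_nonneg ha] using
        (le_abs_self _).trans (abs_exp_sub_one_le (x := a) (by rwa [abs_of_nonneg ha]))
    calc exp (a * ((l + 1 : ℕ) + 1 / 2) - 1 / 2) - W = (exp a - 1) * W := by
          rw [hW, sub_mul, ← exp_add]
          push_cast
          ring_nf
      _ ≤ 2 * a * W := by gcongr
  have down_step : l * (W - exp (a * ((l - 1 : ℕ) + 1 / 2) - 1 / 2)) ≤ l * (a * W) := by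
    rcases l with _ | l
    · simp
    gcongr
    calc W - exp (a * ((l + 1 - 1 : ℕ) + 1 / 2) - 1 / 2) = (1 - exp (-a)) * W := by
          rw [hW, sub_mul, ← exp_add, Nat.add_sub_cancel]
          push_cast
          ring_nf
      _ ≤ a * W := by
          gcongr
          linarith [one_sub_le_exp_neg a]
  calc driftBound (fun k ↦ exp (a * (k + 1 / 2) - 1 / 2)) l
      ≤ (l + 1) * (2 * a * W) + l * (a * W) :=
        add_le_add (mul_le_mul_of_nonneg_left up_step (by positivity)) down_step
    _ ≤ 4 * a * (l + 1 / 2) * W := by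
      have : 0 ≤ l * (a * W) := by positivity
      linarith

namespace IsQuantumWalk

variable {N m : ℕ} {K φ : ℕ → ℝ → ℝ} {c t : ℝ}

theorem hasDerivAt_expectation (h : IsQuantumWalk N K φ) {w : ℕ → ℝ → ℝ} {w' : ℕ → ℝ}
    (hw : ∀ l, HasDerivAt (w l) (w' l) t) :
    HasDerivAt (fun s ↦ expectation N (φ · s) (w · s))
      (expectation N (φ · t) w' +
        ∑ l ∈ range N, (w (l + 1) t - w l t) * current (K · t) (φ · t) l) t := by
  have term_deriv : ∀ l ∈ range (N + 1), HasDerivAt (fun s ↦ w l s * φ l s ^ 2)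
      (w' l * φ l t ^ 2 + w l t * (2 * φ l t * walkVelocity (K · t) (φ · t) l)) t :=
    fun l hl ↦ by
      simpa using (hw l).fun_mul ((h.hasDerivAt l (mem_range_succ_iff.1 hl) t).fun_pow 2)
  have no_current_out : current (K · t) (φ · t) N = 0 := by simp [current, h.rate_top]
  refine (HasDerivAt.fun_sum term_deriv).congr_deriv ?_
  rw [sum_add_distrib, sum_mul_walkVelocity N (K · t) (φ · t) (w · t), no_current_out, mul_zero,
    sub_zero, expectation]

theorem expectation_init (h : IsQuantumWalk N K φ) (f : ℕ → ℝ) :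
    expectation N (φ · 0) f = f 0 := by
  rw [expectation, sum_eq_single_of_mem 0 (by simp), h.init_zero, one_pow, mul_one]
  intro l hl hl0
  simp [h.init_of_pos l (Nat.pos_of_ne_zero hl0) (mem_range_succ_iff.1 hl)]

theorem expectation_const (h : IsQuantumWalk N K φ) (r t : ℝ) :
    expectation N (φ · t) (fun _ ↦ r) = r := by
  have hderiv (s : ℝ) : HasDerivAt (fun s ↦ expectation N (φ · s) fun _ ↦ r) 0 s := by
    simpa [expectation] using h.hasDerivAt_expectation fun _ ↦ hasDerivAt_const s r
  exact (is_const_of_deriv_eq_zero (fun s ↦ (hderiv s).differentiableAt)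
    (fun s ↦ (hderiv s).deriv) t 0).trans (h.expectation_init _)

theorem expectation_comp_min_le (h : IsQuantumWalk N K φ) (hc : 0 ≤ c)
    (hK : ∀ l < m, ∀ t, |K l t| ≤ c * (l + 1)) {w w' : ℕ → ℝ → ℝ}
    (hw : ∀ l t, HasDerivAt (w l) (w' l t) t) (hmono : ∀ t, Monotone (w · t))
    (hdrift : ∀ l t, 0 ≤ t → w' l t + c * driftBound (w · t) l ≤ 0) (ht : 0 ≤ t) :
    expectation N (φ · t) (fun l ↦ w (min l m) t) ≤ w 0 0 := by
  set v : ℕ → ℝ → ℝ := fun l ↦ w (min l m)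
  have hderiv (s : ℝ) := h.hasDerivAt_expectation (w := v) fun l ↦ hw (min l m) s
  have v_mono (s : ℝ) : Monotone (v · s) := fun i j hij ↦ hmono s (min_le_min_right m hij)
  have v_const (s : ℝ) (l : ℕ) (hl : m ≤ l) : v (l + 1) s = v l s := by
    simp only [v, min_eq_right hl, min_eq_right (hl.trans l.le_succ)]
  have v_drift (s : ℝ) (hs : 0 ≤ s) (l : ℕ) :
      w' (min l m) s + c * driftBound (v · s) l ≤ 0 := by
    grw [driftBound_comp_min_le (hmono s) l]
    exact hdrift (min l m) s hs
  have deriv_nonpos (s : ℝ) (hs : 0 ≤ s) :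
      expectation N (φ · s) (fun l ↦ w' (min l m) s) +
        ∑ l ∈ range N, (v (l + 1) s - v l s) * current (K · s) (φ · s) l ≤ 0 := by
    grw [sum_mul_current_le hc (fun l hl ↦ hK l hl s) (v_mono s) (v_const s),
      ← expectation_const_mul, ← expectation_add]
    exact expectation_nonpos (v_drift s hs)
  have antitone : AntitoneOn (fun s ↦ expectation N (φ · s) (v · s)) (Set.Ici 0) :=
    antitoneOn_of_hasDerivWithinAt_nonpos (convex_Ici 0)
      (fun s _ ↦ (hderiv s).continuousAt.continuousWithinAt)
      (fun s _ ↦ (hderiv s).hasDerivWithinAt) fun s hs ↦ deriv_nonpos s (interior_subset hs)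
  exact (antitone Set.self_mem_Ici ht ht).trans_eq ((h.expectation_init _).trans (by simp [v]))

theorem expectation_min_le (h : IsQuantumWalk N K φ) (hc : 0 ≤ c)
    (hK : ∀ l < m, ∀ t, |K l t| ≤ c * (l + 1)) (ht : 0 ≤ t) :
    expectation N (φ · t) (fun l ↦ (min l m : ℕ)) ≤ (exp (2 * c * t) - 1) / 2 := by
  let w (l : ℕ) (s : ℝ) : ℝ := exp (-(2 * c) * s) * (l + 1 / 2)
  have w_deriv (l : ℕ) (s : ℝ) : HasDerivAt (w l) (-(2 * c) * w l s) s :=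
    (((hasDerivAt_id s).const_mul _).exp.mul_const _).congr_deriv
      (by simp only [w, id, mul_one]; ring)
  have w_mono (s : ℝ) : Monotone (w · s) := fun i j hij ↦ by
    dsimp only [w]
    gcongr
  have w_drift (l : ℕ) (s : ℝ) : driftBound (w · s) l = 2 * w l s := by
    have := driftBound_id_add_half l
    simp only [driftBound, w] at this ⊢
    linear_combination exp (-(2 * c) * s) * this
  have decay := h.expectation_comp_min_le hc hK w_deriv w_mono
    (fun l s _ ↦ by linarith [congrArg (c * ·) (w_drift l s)]) ht
  rw [expectation_const_mul, expectation_add, h.expectation_const, neg_mul, exp_neg,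
    inv_mul_le_iff₀ (exp_pos _)] at decay
  simp only [w, mul_zero, exp_zero, one_mul, Nat.cast_zero, zero_add] at decay
  linarith

theorem expectation_exp_min_le_one (h : IsQuantumWalk N K φ) (hc : 0 ≤ c)
    (hK : ∀ l < m, ∀ t, |K l t| ≤ c * (l + 1)) (ht : 0 ≤ t) :
    expectation N (φ · t)
      (fun l ↦ exp (exp (-(4 * c) * t) * ((min l m : ℕ) + 1 / 2) - 1 / 2)) ≤ 1 := by
  let a (s : ℝ) : ℝ := exp (-(4 * c) * s)
  let w (l : ℕ) (s : ℝ) : ℝ := exp (a s * (l + 1 / 2) - 1 / 2)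
  have w_deriv (l : ℕ) (s : ℝ) :
      HasDerivAt (w l) (-c * (4 * a s * (l + 1 / 2) * w l s)) s :=
    ((((hasDerivAt_id s).const_mul _).exp.mul_const _).sub_const _).exp.congr_deriv
      (by simp only [w, a, id, mul_one]; ring)
  have w_mono (s : ℝ) : Monotone (w · s) := fun i j hij ↦ by
    dsimp only [w, a]
    gcongr
  have a_le_one {s : ℝ} (hs : 0 ≤ s) : a s ≤ 1 :=
    exp_le_one_iff.2 (by nlinarith [mul_nonneg hc hs])
  have w_drift (l : ℕ) (s : ℝ) (hs : 0 ≤ s) :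
      driftBound (w · s) l ≤ 4 * a s * (l + 1 / 2) * w l s :=
    driftBound_exp_le (exp_pos _).le (a_le_one hs) l
  have decay := h.expectation_comp_min_le hc hK w_deriv w_mono
    (fun l s hs ↦ by linarith [mul_le_mul_of_nonneg_left (w_drift l s hs) hc]) ht
  simpa [w, a] using decay

theorem mean_le_mul_exp_sub_one (h : IsQuantumWalk N K φ) (hK : ∀ t, |K 0 t| ≤ c) (ht : 0 ≤ t) :
    expectation N (φ · t) (fun l ↦ l) ≤ N * ((exp (2 * c * t) - 1) / 2) := by
  have le_mul_min : ∀ l ≤ N, (l : ℝ) ≤ N * (min l 1 : ℕ) := fun l hl ↦ by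
    rcases l with _ | l
    · simp
    · simpa using (Nat.cast_le (α := ℝ)).2 hl
  calc expectation N (φ · t) (fun l ↦ l)
      ≤ N * expectation N (φ · t) (fun l ↦ (min l 1 : ℕ)) :=
        (expectation_mono le_mul_min).trans_eq (expectation_const_mul _)
    _ ≤ N * ((exp (2 * c * t) - 1) / 2) := by
      gcongr
      exact h.expectation_min_le ((abs_nonneg _).trans (hK 0))
        (fun l hl s ↦ by simpa [Nat.lt_one_iff.1 hl] using hK s) ht

theorem mean_le_of_le_exp_exp (h : IsQuantumWalk N K φ) (hc : 0 ≤ c)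
    (hK : ∀ l < m, ∀ t, |K l t| ≤ c * (l + 1)) (ht : 0 ≤ t)
    (hN : (N : ℝ) ≤ exp (exp (-(4 * c) * t) * (m + 1 / 2) - 1 / 2)) :
    expectation N (φ · t) (fun l ↦ l) ≤ (exp (2 * c * t) + 1) / 2 := by
  have le_min_add_exp : ∀ l ≤ N, (l : ℝ) ≤ (min l m : ℕ) +
      exp (exp (-(4 * c) * t) * ((min l m : ℕ) + 1 / 2) - 1 / 2) := fun l hl ↦ by
    rcases le_total l m with hlm | hml
    · simpa only [min_eq_left hlm] using le_add_of_nonneg_right (exp_pos _).le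
    · rw [min_eq_right hml]
      exact ((Nat.cast_le.2 hl).trans hN).trans (le_add_of_nonneg_left m.cast_nonneg)
  calc expectation N (φ · t) (fun l ↦ l)
      ≤ (exp (2 * c * t) - 1) / 2 + 1 :=
        ((expectation_mono le_min_add_exp).trans_eq expectation_add).trans
          (add_le_add (h.expectation_min_le hc hK ht) (h.expectation_exp_min_le_one hc hK ht))
    _ = (exp (2 * c * t) + 1) / 2 := by ring

end IsQuantumWalk

theorem mul_exp_sub_one_le_exp_mul {p : ℝ} (hp : 1 ≤ p) (x : ℝ) :
    p * (exp x - 1) ≤ exp (p * x) := by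
  have bernoulli := one_add_mul_self_le_rpow_one_add
    (by linarith [exp_pos x] : -1 ≤ exp x - 1) hp
  rw [add_sub_cancel, ← exp_mul, mul_comm x] at bernoulli
  linarith

theorem le_exp_exp_of_time_lt {n M c ε t : ℝ} (hM : 0 < M) (hc : 0 < c) (hε : 0 < ε)
    (hn : 2 * (1 + ε) < n) (ht : 0 ≤ t)
    (htime : t < 1 / (4 * c * (1 + exp 1)) * (log M - 2 - log (log (n ^ 3 / (2 * ε))))) :
    n ≤ exp (exp (-(4 * c) * t) * (M + 1 / 2) - 1 / 2) := by
  set L := log (n ^ 3 / (2 * ε))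
  have log_le_L : log n ≤ L := by
    refine log_le_log (by linarith) ((le_div_iff₀ (by positivity)).2 ?_)
    have two_mul_le_sq : 2 * ε ≤ n ^ 2 := by nlinarith
    calc n * (2 * ε) ≤ n * n ^ 2 := mul_le_mul_of_nonneg_left two_mul_le_sq (by linarith)
      _ = n ^ 3 := by ring
  have half_lt_log : 1 / 2 < log n := by
    linarith [log_two_gt_d9, log_le_log two_pos (by linarith : 2 ≤ n)]
  have log_L_le : log L + 2 ≤ -(4 * c) * t + log M := by
    rw [one_div, inv_mul_eq_div, lt_div_iff₀ (by positivity)] at htime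
    have : 0 ≤ c * t * exp 1 := by positivity
    linarith
  have L_mul_exp_le : L * exp 2 ≤ exp (-(4 * c) * t) * M := by
    simpa only [exp_add, exp_log (show 0 < L by linarith), exp_log hM] using
      exp_le_exp.2 log_L_le
  have two_mul_L_le : 2 * L ≤ L * exp 2 := by nlinarith [add_one_le_exp (2 : ℝ)]
  rw [← log_le_iff_le_exp (by linarith)]
  linarith [exp_pos (-(4 * c) * t)]

theorem lyapunov_bound_general {N M : ℕ} {K φ : ℕ → ℝ → ℝ} (h : IsQuantumWalk N K φ)
    (hM : 0 < M) {c ε t : ℝ} (hc : 0 < c) (hK : ∀ l < M, ∀ t, |K l t| ≤ c * (l + 1))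
    (hε : 0 < ε) (ht : 0 ≤ t)
    (htime : t < 1 / (4 * c * (1 + exp 1)) *
      (log M - 2 - log (log ((N : ℝ) ^ 3 / (2 * ε))))) :
    expectation N (φ · t) (fun l ↦ l) ≤ exp (2 * c * (1 + ε) * t) := by
  have one_le : 1 ≤ exp (2 * c * t) := one_le_exp (by positivity)
  rcases le_or_gt (N : ℝ) (2 * (1 + ε)) with hN | hN
  · calc expectation N (φ · t) (fun l ↦ l)
        ≤ N * ((exp (2 * c * t) - 1) / 2) := h.mean_le_mul_exp_sub_one (by simpa using hK 0 hM) ht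
      _ ≤ (1 + ε) * (exp (2 * c * t) - 1) := by nlinarith
      _ ≤ exp ((1 + ε) * (2 * c * t)) := mul_exp_sub_one_le_exp_mul (by linarith) _
      _ = exp (2 * c * (1 + ε) * t) := by ring_nf
  · calc expectation N (φ · t) (fun l ↦ l)
        ≤ (exp (2 * c * t) + 1) / 2 := h.mean_le_of_le_exp_exp hc.le hK ht
          (le_exp_exp_of_time_lt (Nat.cast_pos.2 hM) hc hε hN ht htime)
      _ ≤ exp (2 * c * t) := by linarith
      _ ≤ exp (2 * c * (1 + ε) * t) := exp_le_exp.2 (by nlinarith [mul_pos hc hε])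

/-- Lyapunov bound: if the quantum-walk rates satisfy `|K_l(t)| ≤ c(l+1)` for `l ≤ M`, then
for every `ε > 0` the average block size obeys `E_{s,t}[l] ≤ exp(2c(1+ε)t)` for all times
`0 ≤ t < (1/(4c(1+e)))(log M − 2 − log log(N′³/(2ε)))`. -/
theorem lyapunov_bound (N' : ℕ) (hN' : 0 < N') (K : ℕ → ℝ → ℝ) (φ : ℕ → ℝ → ℝ)
    (hKcont : ∀ l, Continuous (K l))
    (hKtop : ∀ t : ℝ, K N' t = 0)
    (hODE : ∀ l ≤ N', ∀ t : ℝ, HasDerivAt (φ l)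
      ((if l = 0 then 0 else K (l - 1) t * φ (l - 1) t) - K l t * φ (l + 1) t) t)
    (hinit0 : φ 0 0 = 1) (hinit : ∀ l, 0 < l → φ l 0 = 0)
    (hnorm : ∀ t : ℝ, ∑ l ∈ Finset.range (N' + 1), (φ l t) ^ 2 = 1)
    (M : ℕ) (hMpos : 0 < M) (hMN : M ≤ N') (c : ℝ) (hc : 0 < c)
    (hK : ∀ l ≤ M, ∀ t : ℝ, |K l t| ≤ c * (l + 1)) :
    ∀ ε > (0 : ℝ), ∀ t : ℝ, 0 ≤ t →
      t < (1 / (4 * c * (1 + Real.exp 1))) *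
        (Real.log M - 2 - Real.log (Real.log ((N' : ℝ) ^ 3 / (2 * ε)))) →
      ∑ l ∈ Finset.range (N' + 1), (l : ℝ) * (φ l t) ^ 2 ≤ Real.exp (2 * c * (1 + ε) * t) := by
  exact fun ε hε t ht htime ↦ lyapunov_bound_general
    ⟨hKtop, hODE, hinit0, fun l hl _ ↦ hinit l hl⟩ hMpos hc (fun l hl ↦ hK l hl.le) hε ht htime
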